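/- arXiv:2212.12785 — 2 statements merged into one kernel-verified Lean document; each statement's English description precedes it below -/
import Mathlib

section
/- Completeness of CL signature verification: for every secret key (x, y, z_1, …, z_l) ∈ Z_p^{l+2}, every message vector (m_0, m_1, …, m_l) ∈ Z_p^{l+1}, and every randomness α ∈ Z_p, the honestly generated signature σ = (a, {A_i}, b, {B_i}, c), where a = g^{α}, A_i = a^{z_i}, b = a^{y}, B_i = A_i^{y}, and c = a^{x} · (g^{m_0} · ∏_{i=1}^{l} (g^{z_i})^{m_i})^{α·x·y}, simultaneously satisfies all three verification checks: (i) e(a, g^{z_i}) = e(g, A_i) for all i, (ii) e(a, g^{y}) = e(g, b) and e(A_i, g^{y}) = e(g, B_i) for all i, and (iii) e(g^{x}, a) · e(g^{x}, b)^{m_0} · ∏_{i=1}^{l} e(g^{x}, B_i)^{m_i} = e(g, c). -/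
theorem prod_zpow_aux {H : Type*} [CommGroup H] (h : H) {ι : Type*} (s : Finset ι) (f : ι → ℤ) :
    ∏ i ∈ s, h ^ f i = h ^ ∑ i ∈ s, f i := by
  classical
  induction s using Finset.induction_on with
  | empty => simp
  | insert a s ha ih => rw [Finset.prod_insert ha, Finset.sum_insert ha, ih, zpow_add]

/-- Completeness of CL signature verification: for every secret key
`(x, y, z₁, …, z_l)`, every message vector `(m₀, m₁, …, m_l)`, and every
randomness `α`, the honestly generated signature `(a, {A i}, b, {B i}, c)` with
`a = g^α`, `A i = a^(z i)`, `b = a^y`, `B i = (A i)^y`,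
`c = a^x * (g^(m₀) * ∏ i, (g^(z i))^(m i))^(α*x*y)`
satisfies all three verification checks. -/
theorem cl_completeness
    {G GT : Type*} [CommGroup G] [CommGroup GT]
    (p : ℕ) (hp : p.Prime) (hGcard : Nat.card G = p) (hGTcard : Nat.card GT = p)
    (g : G) (hg : ∀ x : G, x ∈ Subgroup.zpowers g)
    (e : G → G → GT)
    (he : ∀ (u v : G) (a b : ℤ), e (u ^ a) (v ^ b) = e u v ^ (a * b)) :
    ∀ (l : ℕ) (x y : ℤ) (z : Fin l → ℤ) (m₀ : ℤ) (m : Fin l → ℤ) (α : ℤ),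
    ∀ (a b c : G) (A B : Fin l → G),
      a = g ^ α →
      (∀ i, A i = a ^ z i) →
      b = a ^ y →
      (∀ i, B i = (A i) ^ y) →
      c = a ^ x * (g ^ m₀ * ∏ i, (g ^ z i) ^ m i) ^ (α * x * y) →
      ((∀ i, e a (g ^ z i) = e g (A i)) ∧
       (e a (g ^ y) = e g b ∧ ∀ i, e (A i) (g ^ y) = e g (B i)) ∧
       e (g ^ x) a * (e (g ^ x) b) ^ m₀ * ∏ i, (e (g ^ x) (B i)) ^ m i = e g c) := by
  intro l x y z m₀ m α a b c A B ha hA hb hB hc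
  have h1 : ∀ t : ℤ, e g (g ^ t) = e g g ^ t := by
    intro t
    have := he g g 1 t
    simpa using this
  subst ha
  have hA' : ∀ i, A i = g ^ (α * z i) := fun i => by rw [hA, zpow_mul]
  have hB' : ∀ i, B i = g ^ (α * z i * y) := fun i => by rw [hB, hA', ← zpow_mul]
  have hb' : b = g ^ (α * y) := by rw [hb, zpow_mul]
  have hc' : c = g ^ (α * x + (m₀ + ∑ i, z i * m i) * (α * x * y)) := by
    rw [hc]
    simp only [← zpow_mul, prod_zpow_aux, ← zpow_add]
  refine ⟨fun i => ?_, ⟨?_, fun i => ?_⟩, ?_⟩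
  · rw [hA', he, h1]
  · rw [hb', he, h1]
  · rw [hA', hB', he, h1]
  · rw [hb', hc', h1]
    simp only [hB', he, ← zpow_mul, prod_zpow_aux, ← zpow_add]
    congr 1
    have : ∑ i, x * (α * z i * y) * m i = (∑ i, z i * m i) * (α * x * y) := by
      rw [Finset.sum_mul]
      exact Finset.sum_congr rfl fun i _ => by ring
    rw [this]
    ring
end

section
/- Correctness of the re-randomization underlying unlinkable shows of a CL signature: if σ = (a, {A_i}, b, {B_i}, c) is a signature satisfying all three CL verification equations for public key (X, Y, Z_1, …, Z_l) and message vector (m_0, …, m_l), then for every r ∈ Z_p the tuple σ' = (a^r, {A_i^r}, b^r, {B_i^r}, c^r) also satisfies all three verification equations for the same public key and message vector. -/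
/-- Correctness of the re-randomization underlying unlinkable shows of a CL
signature: if `(a, {A i}, b, {B i}, c)` satisfies all three CL verification
equations for public key `(X, Y, Z₁, …, Z_l)` and message vector `(m₀, …, m_l)`,
then for every `r` the tuple `(a^r, {(A i)^r}, b^r, {(B i)^r}, c^r)` also
satisfies all three verification equations for the same public key and
message vector. -/
theorem cl_rerandomization_correct
    {G GT : Type*} [CommGroup G] [CommGroup GT]
    (p : ℕ) (hp : p.Prime) (hGcard : Nat.card G = p) (hGTcard : Nat.card GT = p)
    (g : G) (hg : ∀ x : G, x ∈ Subgroup.zpowers g)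
    (e : G → G → GT)
    (he : ∀ (u v : G) (a b : ℤ), e (u ^ a) (v ^ b) = e u v ^ (a * b))
    (l : ℕ) (X Y : G) (Z : Fin l → G)
    (m₀ : ℤ) (m : Fin l → ℤ)
    (a b c : G) (A B : Fin l → G)
    (h1 : ∀ i, e a (Z i) = e g (A i))
    (h2 : e a Y = e g b ∧ ∀ i, e (A i) Y = e g (B i))
    (h3 : e X a * (e X b) ^ m₀ * ∏ i, (e X (B i)) ^ m i = e g c)
    (r : ℤ) :
    (∀ i, e (a ^ r) (Z i) = e g ((A i) ^ r)) ∧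
    (e (a ^ r) Y = e g (b ^ r) ∧ ∀ i, e ((A i) ^ r) Y = e g ((B i) ^ r)) ∧
    e X (a ^ r) * (e X (b ^ r)) ^ m₀ * ∏ i, (e X ((B i) ^ r)) ^ m i = e g (c ^ r) := by
  have hl : ∀ u v : G, e (u ^ r) v = e u v ^ r := by
    intro u v
    have := he u v r 1
    rwa [zpow_one, mul_one] at this
  have hr : ∀ u v : G, e u (v ^ r) = e u v ^ r := by
    intro u v
    have := he u v 1 r
    rwa [zpow_one, one_mul] at this
  refine ⟨fun i => by rw [hl, hr, h1], ⟨by rw [hl, hr, h2.1], fun i => by rw [hl, hr, h2.2]⟩, ?_⟩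
  rw [hr g c, ← h3, mul_zpow, mul_zpow, ← Finset.prod_zpow, hr, hr, zpow_comm]
  congr 1
  refine Finset.prod_congr rfl fun i _ => ?_
  rw [hr, zpow_comm]
end
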